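/- Let R be an anti-symmetric cross ratio on the circle ℝ/ℤ such that R(a,b,c,d) = 0 for every ordered quadruple (a,b,c,d) of pairwise distinct points. Then there is a constant k ∈ ℝ such that R(a,b,c,d) = k·R₀(a,b,c,d) for every quadruple (a,b,c,d) of pairwise distinct points; in particular R(a,b,c,d) = k whenever the quadruple (a,c,b,d) is ordered. -/

import Mathlib

/-- The circle `ℝ/ℤ`. -/
abbrev Circle1 := AddCircle (1 : ℝ)

/-- Pairwise distinctness of three points. -/
def PD3 {X : Type*} (a b c : X) : Prop := a ≠ b ∧ a ≠ c ∧ b ≠ c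

/-- Pairwise distinctness of four points. -/
def PD4 {X : Type*} (a b c d : X) : Prop :=
  a ≠ b ∧ a ≠ c ∧ a ≠ d ∧ b ≠ c ∧ b ≠ d ∧ c ≠ d

/-- Pairwise distinctness of five points. -/
def PD5 {X : Type*} (a b c d e : X) : Prop :=
  a ≠ b ∧ a ≠ c ∧ a ≠ d ∧ a ≠ e ∧ b ≠ c ∧ b ≠ d ∧ b ≠ e ∧ c ≠ d ∧ c ≠ e ∧ d ≠ e

/-- A triple of points of `ℝ/ℤ` is ordered if it lifts to reals
`t₁ < t₂ < t₃ < t₁ + 1`. -/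
def Ordered3 (a b c : Circle1) : Prop :=
  ∃ t₁ t₂ t₃ : ℝ, t₁ < t₂ ∧ t₂ < t₃ ∧ t₃ < t₁ + 1 ∧
    a = (t₁ : Circle1) ∧ b = (t₂ : Circle1) ∧ c = (t₃ : Circle1)

/-- A quadruple of points of `ℝ/ℤ` is ordered if it lifts to reals
`t₁ < t₂ < t₃ < t₄ < t₁ + 1`. -/
def Ordered4 (a b c d : Circle1) : Prop :=
  ∃ t₁ t₂ t₃ t₄ : ℝ, t₁ < t₂ ∧ t₂ < t₃ ∧ t₃ < t₄ ∧ t₄ < t₁ + 1 ∧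
    a = (t₁ : Circle1) ∧ b = (t₂ : Circle1) ∧ c = (t₃ : Circle1) ∧ d = (t₄ : Circle1)

/-- `R` is an anti-symmetric cross ratio: bounded on pairwise distinct quadruples,
anti-symmetric in the first pair and under exchanging the two pairs, additive (cocycle)
in the first pair, and extended by `0` to the degenerate quadruples. -/
def IsCrossRatio {X : Type*} (R : X → X → X → X → ℝ) : Prop :=
  (∃ M, ∀ a b c d, PD4 a b c d → |R a b c d| ≤ M) ∧
  (∀ a b c d, PD4 a b c d → R a b c d = - R b a c d) ∧
  (∀ a b c d, PD4 a b c d → R c d a b = - R a b c d) ∧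
  (∀ a b b' c d, PD5 a b b' c d → R a b c d + R b b' c d = R a b' c d) ∧
  (∀ a b c, PD3 a b c → R a a b c = 0) ∧
  (∀ a b c, PD3 a b c → R b c a a = 0)

/-!
Let `(a, c, b, d)` be cyclically ordered. If `a'` lies between `a` and `c`, then the cocycle
identity writes `R a b c d` as `R a a' c d + R a' b c d`, whose first summand vanishes because
`(a, a', c, d)` is ordered. Together with the cyclic symmetry `R c d b a = R a b c d` this says
that `R a b c d` does not change when one of the four points moves without crossing the others.
Any two cyclically ordered quadruples are joined by such moves, so `R` is constant on crossing
quadruples `(a, b, c, d)`, those with `(a, c, b, d)` ordered. Up to the symmetries of a cross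
ratio every quadruple of distinct points is ordered or crossing, which determines `R`.
-/

section CircularOrder

variable {X : Type*} [CircularOrder X] {a b c d x : X}

lemma ne_of_sbtw (h : sbtw a b c) : a ≠ b := by
  rintro rfl
  exact sbtw_irrefl_left h

lemma sbtw_or_sbtw_of_ne (hab : a ≠ b) (hac : a ≠ c) (hbc : b ≠ c) :
    sbtw a b c ∨ sbtw a c b := by
  by_contra! ⟨habc, hacb⟩
  rw [← btw_iff_not_sbtw] at habc hacb
  rcases habc.antisymm hacb.cyclic_right with h | h | h
  exacts [hbc h.symm, hab h.symm, hac h]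

/-- The points `a`, `b`, `c`, `d` of a circularly ordered set are pairwise distinct and are met in
this cyclic order. It generalizes `Ordered4`, see `ordered4_iff_cyclicallyOrdered`. -/
def CyclicallyOrdered (a b c d : X) : Prop := sbtw a b c ∧ sbtw a c d

namespace CyclicallyOrdered

lemma rotate (h : CyclicallyOrdered a b c d) : CyclicallyOrdered b c d a :=
  ⟨(h.2.cyclic_left.trans_right h.1.cyclic_right).cyclic_right,
    (h.1.trans_right h.2).cyclic_left⟩

lemma pd4 (h : CyclicallyOrdered a b c d) : PD4 a b c d :=
  ⟨ne_of_sbtw h.1, ne_of_sbtw h.2, (ne_of_sbtw h.2.cyclic_right).symm,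
    ne_of_sbtw h.1.cyclic_left, ne_of_sbtw h.rotate.2, ne_of_sbtw h.2.cyclic_left⟩

end CyclicallyOrdered

lemma cyclicallyOrdered_insert (h : sbtw a b c) (ha : a ≠ x) (hb : b ≠ x) (hc : c ≠ x) :
    CyclicallyOrdered a x b c ∨ CyclicallyOrdered a b x c ∨ CyclicallyOrdered a b c x := by
  have hab : a ≠ b := ne_of_sbtw h
  have hac : a ≠ c := (ne_of_sbtw h.cyclic_right).symm
  rcases sbtw_or_sbtw_of_ne ha hab hb.symm with hxb | hbx
  · exact .inl ⟨hxb, h⟩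
  rcases sbtw_or_sbtw_of_ne ha hac hc.symm with hxc | hcx
  · exact .inr (.inl ⟨hbx, hxc⟩)
  · exact .inr (.inr ⟨h, hcx⟩)

end CircularOrder

namespace PD4

variable {X : Type*} {a b c d : X}

lemma swap_left (h : PD4 a b c d) : PD4 b a c d := by
  obtain ⟨hab, hac, had, hbc, hbd, hcd⟩ := h
  exact ⟨hab.symm, hbc, hbd, hac, had, hcd⟩

lemma swap_middle (h : PD4 a b c d) : PD4 a c b d := by
  obtain ⟨hab, hac, had, hbc, hbd, hcd⟩ := h
  exact ⟨hac, hab, had, hbc.symm, hcd, hbd⟩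

lemma swap_pairs (h : PD4 a b c d) : PD4 c d a b := by
  obtain ⟨hab, hac, had, hbc, hbd, hcd⟩ := h
  exact ⟨hcd, hac.symm, hbc.symm, had.symm, hbd.symm, hab⟩

lemma swap_right (h : PD4 a b c d) : PD4 a b d c :=
  h.swap_pairs.swap_left.swap_pairs

end PD4

/-- The algebraic axioms of an anti-symmetric cross ratio, with values in an arbitrary additive
group: antisymmetry, exchange of the two pairs, and additivity in the first pair. All three concern
pairwise distinct points only, so values on degenerate quadruples are arbitrary, and no bound is
imposed. -/
structure IsAlgebraicCrossRatio {X A : Type*} [AddCommGroup A] (R : X → X → X → X → A) :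
    Prop where
  antisymm {a b c d : X} : PD4 a b c d → R a b c d = -R b a c d
  exchange {a b c d : X} : PD4 a b c d → R c d a b = -R a b c d
  cocycle {a b b' c d : X} : PD5 a b b' c d → R a b c d + R b b' c d = R a b' c d

lemma IsCrossRatio.isAlgebraicCrossRatio {X : Type*} {R : X → X → X → X → ℝ}
    (hR : IsCrossRatio R) : IsAlgebraicCrossRatio R where
  antisymm := hR.2.1 _ _ _ _
  exchange := hR.2.2.1 _ _ _ _
  cocycle := hR.2.2.2.1 _ _ _ _ _

/-- `R` is zero on all cyclically ordered quadruples, the assumption under which its value on a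
crossing quadruple `(a, b, c, d)`, one with `(a, c, b, d)` cyclically ordered, is constant. -/
def VanishesOnOrdered {X A : Type*} [CircularOrder X] [Zero A] (R : X → X → X → X → A) : Prop :=
  ∀ a b c d, CyclicallyOrdered a b c d → R a b c d = 0

namespace IsAlgebraicCrossRatio

lemma const_mul {X A : Type*} [Ring A] {R : X → X → X → X → A} (hR : IsAlgebraicCrossRatio R)
    (k : A) : IsAlgebraicCrossRatio fun a b c d ↦ k * R a b c d where
  antisymm h := by rw [hR.antisymm h, mul_neg]
  exchange h := by rw [hR.exchange h, mul_neg]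
  cocycle h := by rw [← mul_add, hR.cocycle h]

variable {X A : Type*} [AddCommGroup A] {R : X → X → X → X → A} {a b c d a' b' c' d' : X}

lemma antisymm_right (hR : IsAlgebraicCrossRatio R) (h : PD4 a b c d) :
    R a b c d = -R a b d c :=
  calc R a b c d = -R c d a b := by rw [hR.exchange h, neg_neg]
    _ = R d c a b := by rw [hR.antisymm h.swap_pairs, neg_neg]
    _ = -R a b d c := hR.exchange h.swap_right

variable [CircularOrder X]

lemma rotate (hR : IsAlgebraicCrossRatio R) (h : CyclicallyOrdered a c b d) :
    R c d b a = R a b c d := by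
  have habcd : PD4 a b c d := h.pd4.swap_middle
  exact neg_injective ((hR.antisymm_right habcd.swap_pairs).symm.trans (hR.exchange habcd))

theorem eq_of_ordered_of_crossing {R' : X → X → X → X → A} (hR : IsAlgebraicCrossRatio R)
    (hR' : IsAlgebraicCrossRatio R')
    (hordered : ∀ a b c d, CyclicallyOrdered a b c d → R a b c d = R' a b c d)
    (hcrossing : ∀ a b c d, CyclicallyOrdered a c b d → R a b c d = R' a b c d)
    (h : PD4 a b c d) : R a b c d = R' a b c d := by
  obtain ⟨hab, hac, had, hbc, hbd, hcd⟩ := id h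
  wlog hacd : sbtw a c d generalizing c d
  · have hadc : sbtw a d c := (sbtw_or_sbtw_of_ne hac had hcd).resolve_left hacd
    rw [hR.antisymm_right h, hR'.antisymm_right h,
      this h.swap_right had hac hbd hbc hcd.symm hadc]
  rcases cyclicallyOrdered_insert hacd hab hbc.symm hbd.symm with habcd | hacbd | hacdb
  · exact hordered a b c d habcd
  · exact hcrossing a b c d hacbd
  · have hbacd : CyclicallyOrdered b a c d := hacdb.rotate.rotate.rotate
    rw [hR.antisymm h, hR'.antisymm h, hordered b a c d hbacd]

lemma eq_of_move_first (hR : IsAlgebraicCrossRatio R) (hR0 : VanishesOnOrdered R)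
    (h : CyclicallyOrdered a c b d) (h' : CyclicallyOrdered a' c b d) :
    R a b c d = R a' b c d := by
  rcases eq_or_ne a a' with rfl | haa'
  · rfl
  wlog hdaa' : sbtw d a a' generalizing a a'
  · have hda'a := (sbtw_or_sbtw_of_ne (ne_of_sbtw h.2.cyclic_right) (ne_of_sbtw h'.2.cyclic_right)
      haa').resolve_left hdaa'
    exact (this h' h haa'.symm hda'a).symm
  have hda'c : sbtw d a' c := h'.rotate.rotate.rotate.1
  have haa'cd : CyclicallyOrdered a a' c d := CyclicallyOrdered.rotate ⟨hdaa', hda'c⟩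
  have hpd : PD5 a a' b c d := by
    have hacbd := h.pd4
    have ha'cbd := h'.pd4
    simp_all [PD4, PD5, eq_comm]
  rw [← hR.cocycle hpd, hR0 a a' c d haa'cd, zero_add]

lemma eq_of_move_third (hR : IsAlgebraicCrossRatio R) (hR0 : VanishesOnOrdered R)
    (h : CyclicallyOrdered a c b d) (h' : CyclicallyOrdered a c' b d) :
    R a b c d = R a b c' d := by
  rw [← hR.rotate h, ← hR.rotate h', hR.eq_of_move_first hR0 h.rotate h'.rotate]

lemma eq_of_move_second (hR : IsAlgebraicCrossRatio R) (hR0 : VanishesOnOrdered R)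
    (h : CyclicallyOrdered a c b d) (h' : CyclicallyOrdered a c b' d) :
    R a b c d = R a b' c d := by
  rw [← hR.rotate h, ← hR.rotate h', hR.eq_of_move_third hR0 h.rotate h'.rotate]

lemma eq_of_move_fourth (hR : IsAlgebraicCrossRatio R) (hR0 : VanishesOnOrdered R)
    (h : CyclicallyOrdered a c b d) (h' : CyclicallyOrdered a c b d') :
    R a b c d = R a b c d' := by
  rw [← hR.rotate h, ← hR.rotate h', hR.eq_of_move_second hR0 h.rotate h'.rotate]

lemma eq_of_common_first (hR : IsAlgebraicCrossRatio R) (hR0 : VanishesOnOrdered R)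
    (h : CyclicallyOrdered a c b d) (h' : CyclicallyOrdered a c' b' d') :
    R a b c d = R a b' c' d' := by
  rcases eq_or_ne b b' with rfl | hbb'
  · rw [hR.eq_of_move_third hR0 h ⟨h'.1, h.2⟩, hR.eq_of_move_fourth hR0 ⟨h'.1, h.2⟩ h']
  wlog habb' : sbtw a b b' generalizing b b' c c' d d'
  · have hab'b := (sbtw_or_sbtw_of_ne (ne_of_sbtw h.2) (ne_of_sbtw h'.2) hbb').resolve_left habb'
    exact (this h' h hbb'.symm hab'b).symm
  have hbd' : CyclicallyOrdered a c b d' := ⟨h.1, habb'.trans_right h'.2⟩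
  have hcb' : CyclicallyOrdered a c b' d' := ⟨h.1.trans_right habb', h'.2⟩
  calc R a b c d = R a b c d' := hR.eq_of_move_fourth hR0 h hbd'
    _ = R a b' c d' := hR.eq_of_move_second hR0 hbd' hcb'
    _ = R a b' c' d' := hR.eq_of_move_third hR0 hcb' h'

lemma exists_eq_with_first (hR : IsAlgebraicCrossRatio R) (hR0 : VanishesOnOrdered R)
    (h : CyclicallyOrdered a c b d) (x : X) :
    ∃ b' c' d', CyclicallyOrdered x c' b' d' ∧ R x b' c' d' = R a b c d := by
  rcases eq_or_ne a x with rfl | ha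
  · exact ⟨b, c, d, h, rfl⟩
  rcases eq_or_ne b x with rfl | hb
  · exact ⟨a, d, c, h.rotate.rotate, by rw [hR.rotate h.rotate, hR.rotate h]⟩
  rcases sbtw_or_sbtw_of_ne ha h.pd4.2.1 hb.symm with haxb | habx
  · have hx : CyclicallyOrdered a x b d := ⟨haxb, h.2⟩
    exact ⟨d, b, a, hx.rotate, by rw [hR.rotate hx, hR.eq_of_move_third hR0 h hx]⟩
  · have hx : CyclicallyOrdered a c b x := ⟨h.1, habx⟩
    exact ⟨c, a, b, hx.rotate.rotate.rotate, by
      rw [hR.rotate hx.rotate.rotate, hR.rotate hx.rotate, hR.rotate hx,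
        hR.eq_of_move_fourth hR0 h hx]⟩

theorem exists_forall_crossing_eq (hR : IsAlgebraicCrossRatio R) (hR0 : VanishesOnOrdered R) :
    ∃ k, ∀ a b c d, CyclicallyOrdered a c b d → R a b c d = k := by
  by_cases hX : ∃ a b c d : X, CyclicallyOrdered a c b d
  · obtain ⟨a, b, c, d, h⟩ := hX
    refine ⟨R a b c d, fun a' b' c' d' h' ↦ ?_⟩
    obtain ⟨b'', c'', d'', h'', heq⟩ := hR.exists_eq_with_first hR0 h a'
    rw [← heq, hR.eq_of_common_first hR0 h' h'']
  · exact ⟨0, fun a b c d h ↦ (hX ⟨a, b, c, d, h⟩).elim⟩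

end IsAlgebraicCrossRatio

section AddCircle

variable {α : Type*} [AddCommGroup α] [LinearOrder α] [IsOrderedAddMonoid α] [Archimedean α]
  {p : α}

lemma coe_toIcoMod (hp : 0 < p) (a b : α) : ((toIcoMod hp a b : α) : AddCircle p) = b := by
  rw [← self_sub_toIcoDiv_zsmul, AddCircle.coe_sub, AddCircle.coe_zsmul, AddCircle.coe_period,
    smul_zero, sub_zero]

lemma coe_toIocMod (hp : 0 < p) (a b : α) : ((toIocMod hp a b : α) : AddCircle p) = b := by
  rw [← self_sub_toIocDiv_zsmul, AddCircle.coe_sub, AddCircle.coe_zsmul, AddCircle.coe_period,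
    smul_zero, sub_zero]

lemma sbtw_coe_iff [hp : Fact (0 < p)] {a b c : α} :
    sbtw (a : AddCircle p) b c ↔ toIocMod hp.out a b < toIcoMod hp.out a c := by
  rw [sbtw_iff_not_btw, btw_cyclic, QuotientAddGroup.btw_coe_iff, not_le]

lemma sbtw_coe_of_lt [Fact (0 < p)] {a b c : α} (hab : a < b) (hbc : b < c) (hca : c < a + p) :
    sbtw (a : AddCircle p) b c := by
  rw [sbtw_coe_iff, (toIocMod_eq_self _).2 ⟨hab, (hbc.trans hca).le⟩,
    (toIcoMod_eq_self _).2 ⟨(hab.trans hbc).le, hca⟩]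
  exact hbc

end AddCircle

lemma ordered4_iff_cyclicallyOrdered {a b c d : Circle1} :
    Ordered4 a b c d ↔ CyclicallyOrdered a b c d := by
  constructor
  · rintro ⟨t₁, t₂, t₃, t₄, h₁₂, h₂₃, h₃₄, h₄₁, rfl, rfl, rfl, rfl⟩
    exact ⟨sbtw_coe_of_lt h₁₂ h₂₃ (h₃₄.trans h₄₁), sbtw_coe_of_lt (h₁₂.trans h₂₃) h₃₄ h₄₁⟩
  · induction a using QuotientAddGroup.induction_on with | H s
    induction b using QuotientAddGroup.induction_on with | H t
    induction c using QuotientAddGroup.induction_on with | H u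
    induction d using QuotientAddGroup.induction_on with | H v
    rintro ⟨htu, huv⟩
    have hp : (0 : ℝ) < 1 := one_pos
    exact ⟨s, toIocMod hp s t, toIcoMod hp s u, toIcoMod hp s v, left_lt_toIocMod hp s t,
      sbtw_coe_iff.1 htu, (toIcoMod_le_toIocMod hp s u).trans_lt (sbtw_coe_iff.1 huv),
      toIcoMod_lt_right hp s v, rfl, (coe_toIocMod hp s t).symm, (coe_toIcoMod hp s u).symm,
      (coe_toIcoMod hp s v).symm⟩

theorem stmt9_general {X A : Type*} [CircularOrder X] [Ring A] {R R₀ : X → X → X → X → A}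
    (hR : IsAlgebraicCrossRatio R)
    (hR0 : VanishesOnOrdered R)
    (hR₀ : IsAlgebraicCrossRatio R₀)
    (hR₀0 : VanishesOnOrdered R₀)
    (hR₀1 : ∀ a b c d, CyclicallyOrdered a c b d → R₀ a b c d = 1) :
    ∃ k : A,
      (∀ a b c d, PD4 a b c d → R a b c d = k * R₀ a b c d) ∧
      (∀ a b c d, CyclicallyOrdered a c b d → R a b c d = k) := by
  obtain ⟨k, hk⟩ := hR.exists_forall_crossing_eq hR0
  refine ⟨k, fun a b c d h ↦ hR.eq_of_ordered_of_crossing (hR₀.const_mul k) ?_ ?_ h, hk⟩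
  · intro a b c d hord
    rw [hR0 a b c d hord, hR₀0 a b c d hord, mul_zero]
  · intro a b c d hcross
    rw [hk a b c d hcross, hR₀1 a b c d hcross, mul_one]

/-- an anti-symmetric cross ratio `R` on the circle `ℝ/ℤ` which vanishes
on all ordered quadruples of pairwise distinct points is a constant multiple `k` of the
cross ratio `R₀`; in particular `R a b c d = k` whenever `(a,c,b,d)` is ordered. -/
theorem stmt9 (R : Circle1 → Circle1 → Circle1 → Circle1 → ℝ)
    (hR : IsCrossRatio R)
    (hR0 : ∀ a b c d, Ordered4 a b c d → R a b c d = 0)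
    (R₀ : Circle1 → Circle1 → Circle1 → Circle1 → ℝ)
    (hR₀ : IsCrossRatio R₀)
    (hR₀0 : ∀ a b c d, Ordered4 a b c d → R₀ a b c d = 0)
    (hR₀1 : ∀ a b c d, Ordered4 a c b d → R₀ a b c d = 1) :
    ∃ k : ℝ,
      (∀ a b c d, PD4 a b c d → R a b c d = k * R₀ a b c d) ∧
      (∀ a b c d, Ordered4 a c b d → R a b c d = k) := by
  simp only [ordered4_iff_cyclicallyOrdered] at hR0 hR₀0 hR₀1 ⊢
  exact stmt9_general hR.isAlgebraicCrossRatio hR0 hR₀.isAlgebraicCrossRatio hR₀0 hR₀1
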